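/- Let C be a nonempty compact convex subset of ℝ^n with diameter D := max_{u,v ∈ C} ‖u − v‖, let Π_C be its orthogonal projection, and define P(z, g, η) := (1/η)(z − Π_C(z − η g)) for η > 0. Let F : ℝ^n → ℝ be differentiable, L-Lipschitz, and with Q-Lipschitz gradient (L, Q > 0), and let η ∈ (0, 2/Q). Then for every z ∈ C, ‖P(z, ∇F(z), η)‖² ≤ L·D / (η − Qη²/2). -/

import Mathlib

/-- uniform bound on the squared projected gradient over a compact convex
set of diameter `D`, for an `L`-Lipschitz function with `Q`-Lipschitz gradient and
`η ∈ (0, 2/Q)`. -/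
theorem sq_projected_gradient_le_LD {n : ℕ}
    (C : Set (EuclideanSpace ℝ (Fin n))) (hne : C.Nonempty) (hcpt : IsCompact C)
    (hcv : Convex ℝ C)
    (D : ℝ) (hD : D = Metric.diam C)
    (proj : EuclideanSpace ℝ (Fin n) → EuclideanSpace ℝ (Fin n))
    (hprojmem : ∀ x, proj x ∈ C)
    (hprojnear : ∀ x, ∀ w ∈ C, ‖x - proj x‖ ≤ ‖x - w‖)
    (F : EuclideanSpace ℝ (Fin n) → ℝ) (hF : Differentiable ℝ F)
    (L Q : ℝ) (hL : 0 < L) (hQ : 0 < Q)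
    (hFLip : ∀ x y, |F x - F y| ≤ L * ‖x - y‖)
    (hgradLip : ∀ x y, ‖gradient F x - gradient F y‖ ≤ Q * ‖x - y‖)
    (η : ℝ) (hη : 0 < η) (hη2 : η < 2 / Q) :
    ∀ z ∈ C, ‖η⁻¹ • (z - proj (z - η • gradient F z))‖ ^ 2
      ≤ L * D / (η - Q * η ^ 2 / 2) := by
  intro z hz
  set g := gradient F z with hg
  set p := proj (z - η • g) with hp
  have hpC : p ∈ C := hprojmem _
  -- the gradient is bounded by the Lipschitz constant
  have hgL : ‖g‖ ≤ L := by
    have h1 : LipschitzWith ⟨L, hL.le⟩ F := by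
      apply LipschitzWith.of_dist_le_mul
      intro x y
      rw [Real.dist_eq, dist_eq_norm]
      exact hFLip x y
    have h2 : ‖fderiv ℝ F z‖ ≤ L := norm_fderiv_le_of_lipschitz ℝ h1
    rw [hg, gradient, LinearIsometryEquiv.norm_map]
    exact h2
  -- variational inequality of the projection
  have hvar : inner ℝ (z - η • g - p) (z - p) ≤ 0 := by
    refine (norm_eq_iInf_iff_real_inner_le_zero hcv hpC).1 ?_ z hz
    have : Nonempty C := ⟨⟨p, hpC⟩⟩
    apply le_antisymm
    · exact le_ciInf fun w => hprojnear _ w w.2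
    · exact ciInf_le (f := fun w : C => ‖z - η • g - w‖)
        ⟨0, by rintro _ ⟨w, rfl⟩; exact norm_nonneg _⟩ ⟨p, hpC⟩
  have hsq : ‖z - p‖ ^ 2 ≤ η * inner ℝ g (z - p) := by
    have e : z - η • g - p = (z - p) - η • g := by abel
    rw [e, inner_sub_left, real_inner_self_eq_norm_sq, real_inner_smul_left] at hvar
    linarith
  have hdD : ‖z - p‖ ≤ D := by
    rw [hD, ← dist_eq_norm]
    exact Metric.dist_le_diam_of_mem hcpt.isBounded hz hpC
  have hin : inner ℝ g (z - p) ≤ L * D :=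
    (real_inner_le_norm _ _).trans (mul_le_mul hgL hdD (norm_nonneg _) hL.le)
  have hLD : 0 ≤ L * D := mul_nonneg hL.le ((norm_nonneg _).trans hdD)
  have hηQ : η * Q < 2 := (lt_div_iff₀ hQ).1 hη2
  have hpos : 0 < η - Q * η ^ 2 / 2 := by nlinarith
  have hle : η - Q * η ^ 2 / 2 ≤ η := by
    have : 0 < Q * η ^ 2 := by positivity
    linarith
  calc ‖η⁻¹ • (z - p)‖ ^ 2 = ‖z - p‖ ^ 2 / η ^ 2 := by
        rw [norm_smul, norm_inv, Real.norm_of_nonneg hη.le, mul_pow, inv_pow]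
        field_simp
    _ ≤ η * (L * D) / η ^ 2 := by
        gcongr
        exact hsq.trans (mul_le_mul_of_nonneg_left hin hη.le)
    _ = L * D / η := by field_simp
    _ ≤ L * D / (η - Q * η ^ 2 / 2) := div_le_div_of_nonneg_left hLD hpos hle
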